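/- Let U ⊆ ℝⁿ be open and u ∈ BV(U). Then the coarea formula holds: the total variation |Du|(U) equals ∫_ℝ Per({u > t}, U) dt, where Per(E, U) denotes the perimeter of E in U. -/

import Mathlib

open MeasureTheory
open scoped RealInnerProductSpace ENNReal

/-- The divergence of a vector field `φ : ℝⁿ → ℝⁿ`: `div φ = ∑ᵢ ∂ᵢφⁱ`. -/
noncomputable def divg {n : ℕ}
    (φ : EuclideanSpace ℝ (Fin n) → EuclideanSpace ℝ (Fin n))
    (x : EuclideanSpace ℝ (Fin n)) : ℝ :=
  ∑ i : Fin n, ⟪fderiv ℝ φ x (EuclideanSpace.single i 1), EuclideanSpace.single i 1⟫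

/-- The total variation `|Du|(U)` of `u` on an open set `U ⊆ ℝⁿ`:
`sup {∫_U u · div φ : φ ∈ C¹_c(U, ℝⁿ), |φ| ≤ 1}` (valued in `[0,∞]`). -/
noncomputable def variationOn {n : ℕ} (U : Set (EuclideanSpace ℝ (Fin n)))
    (u : EuclideanSpace ℝ (Fin n) → ℝ) : ℝ≥0∞ :=
  ⨆ (φ : EuclideanSpace ℝ (Fin n) → EuclideanSpace ℝ (Fin n)) (_ : ContDiff ℝ 1 φ)
    (_ : HasCompactSupport φ) (_ : tsupport φ ⊆ U) (_ : ∀ x, ‖φ x‖ ≤ 1),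
    ENNReal.ofReal (∫ x in U, u x * divg φ x)

/-- The perimeter of `E` in `U`: the total variation of `χ_E` in `U`. -/
noncomputable def perimeterIn {n : ℕ} (U : Set (EuclideanSpace ℝ (Fin n)))
    (E : Set (EuclideanSpace ℝ (Fin n))) : ℝ≥0∞ :=
  variationOn U (E.indicator fun _ => (1 : ℝ))

open Set Filter Topology Metric

section Divergence

variable {n : ℕ} {φ : EuclideanSpace ℝ (Fin n) → EuclideanSpace ℝ (Fin n)}

lemma divg_apply (φ : EuclideanSpace ℝ (Fin n) → EuclideanSpace ℝ (Fin n))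
    (x : EuclideanSpace ℝ (Fin n)) :
    divg φ x = ∑ i, fderiv ℝ φ x (EuclideanSpace.single i 1) i := by
  simp [divg, EuclideanSpace.inner_single_right]

lemma continuous_divg (hφ : ContDiff ℝ 1 φ) : Continuous (divg φ) := by
  have h := hφ.continuous_fderiv one_ne_zero
  unfold divg
  fun_prop

lemma divg_eq_zero {x : EuclideanSpace ℝ (Fin n)} (hx : x ∉ tsupport φ) : divg φ x = 0 := by
  have h : fderiv ℝ φ x = 0 :=
    image_eq_zero_of_notMem_tsupport fun h => hx (tsupport_fderiv_subset ℝ h)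
  simp [divg, h]

lemma hasCompactSupport_divg (hc : HasCompactSupport φ) : HasCompactSupport (divg φ) :=
  HasCompactSupport.intro hc fun _ hx => divg_eq_zero hx

lemma divg_comp_add_right (y x : EuclideanSpace ℝ (Fin n)) :
    divg (fun z => φ (z + y)) x = divg φ (x + y) := by
  simp [divg, fderiv_comp_add_right]

lemma exists_abs_divg_le (hφ : ContDiff ℝ 1 φ) (hc : HasCompactSupport φ) :
    ∃ C, ∀ x, ‖divg φ x‖ ≤ C :=
  (hasCompactSupport_divg hc).exists_bound_of_continuous (continuous_divg hφ)

lemma integrable_mul_divg (hφ : ContDiff ℝ 1 φ) (hc : HasCompactSupport φ)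
    {μ : Measure (EuclideanSpace ℝ (Fin n))} {u : EuclideanSpace ℝ (Fin n) → ℝ}
    (hu : Integrable u μ) : Integrable (fun x => u x * divg φ x) μ := by
  obtain ⟨C, hC⟩ := exists_abs_divg_le hφ hc
  exact hu.mul_bdd (c := C) (continuous_divg hφ).aestronglyMeasurable (.of_forall hC)

lemma setIntegral_mul_divg {U : Set (EuclideanSpace ℝ (Fin n))} (hs : tsupport φ ⊆ U)
    (u : EuclideanSpace ℝ (Fin n) → ℝ) :
    ∫ x in U, u x * divg φ x = ∫ x, u x * divg φ x :=
  setIntegral_eq_integral_of_forall_compl_eq_zero fun x hx => by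
    simp [divg_eq_zero fun h => hx (hs h)]

/-- Integration by parts for the divergence of a compactly supported field. -/
lemma integral_mul_divg {w : EuclideanSpace ℝ (Fin n) → ℝ} (hw : ContDiff ℝ 1 w)
    (hφ : ContDiff ℝ 1 φ) (hc : HasCompactSupport φ) :
    ∫ x, w x * divg φ x = -∫ x, fderiv ℝ w x (φ x) := by
  have hw' := hw.continuous_fderiv one_ne_zero
  have hwc := hw.continuous
  have hφ' := hφ.continuous_fderiv one_ne_zero
  have hφc := hφ.continuous
  have hfd (i : Fin n) (x) : fderiv ℝ (fun z => φ z i) x (EuclideanSpace.single i 1)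
      = fderiv ℝ φ x (EuclideanSpace.single i 1) i := by
    have h := (EuclideanSpace.proj (𝕜 := ℝ) i).hasFDerivAt.comp x
      (hφ.differentiable one_ne_zero x).hasFDerivAt
    have h' : HasFDerivAt (fun z => φ z i)
      ((EuclideanSpace.proj (𝕜 := ℝ) i : EuclideanSpace ℝ (Fin n) →L[ℝ] ℝ).comp
        (fderiv ℝ φ x)) x := h
    rw [h'.fderiv]
    rfl
  have hci (i : Fin n) : HasCompactSupport fun z => φ z i :=
    hc.comp_left (g := fun v : EuclideanSpace ℝ (Fin n) => v i) rfl
  have hcfd (i : Fin n) :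
      HasCompactSupport fun x => fderiv ℝ φ x (EuclideanSpace.single i 1) i :=
    (hc.fderiv ℝ).comp_left
      (g := fun L : EuclideanSpace ℝ (Fin n) →L[ℝ] EuclideanSpace ℝ (Fin n) =>
        L (EuclideanSpace.single i 1) i) rfl
  have hI1 (i : Fin n) : Integrable fun x => w x * fderiv ℝ φ x (EuclideanSpace.single i 1) i :=
    Continuous.integrable_of_hasCompactSupport (by fun_prop) (hcfd i).mul_left
  have hI2 (i : Fin n) : Integrable fun x => fderiv ℝ w x (EuclideanSpace.single i 1) * φ x i :=
    Continuous.integrable_of_hasCompactSupport (by fun_prop) (hci i).mul_left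
  have hI3 (i : Fin n) : Integrable fun x => w x * φ x i :=
    Continuous.integrable_of_hasCompactSupport (by fun_prop) (hci i).mul_left
  have key (i : Fin n) : ∫ x, w x * fderiv ℝ φ x (EuclideanSpace.single i 1) i
      = -∫ x, fderiv ℝ w x (EuclideanSpace.single i 1) * φ x i := by
    have h := integral_mul_fderiv_eq_neg_fderiv_mul_of_integrable (μ := volume) (f := w)
      (g := fun z => φ z i) (v := EuclideanSpace.single i 1) (hI2 i)
      (by simpa only [hfd] using hI1 i) (hI3 i)
      (fun x _ => hw.differentiable one_ne_zero x)
      (fun x _ => ((EuclideanSpace.proj (𝕜 := ℝ) i).differentiableAt.comp x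
        (hφ.differentiable one_ne_zero x)))
    simpa only [hfd] using h
  have hexp (x) : fderiv ℝ w x (φ x)
      = ∑ i, fderiv ℝ w x (EuclideanSpace.single i 1) * φ x i := by
    conv_lhs => rw [← (EuclideanSpace.basisFun (Fin n) ℝ).sum_repr (φ x)]
    simp [mul_comm]
  simp only [divg_apply, hexp, Finset.mul_sum]
  rw [integral_finsetSum _ fun i _ => hI1 i, integral_finsetSum _ fun i _ => hI2 i,
    ← Finset.sum_neg_distrib]
  exact Finset.sum_congr rfl fun i _ => key i

lemma integral_divg (hφ : ContDiff ℝ 1 φ) (hc : HasCompactSupport φ) : ∫ x, divg φ x = 0 := by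
  simpa using integral_mul_divg (w := fun _ => 1) contDiff_const hφ hc

end Divergence

section Variation

variable {n : ℕ} {U : Set (EuclideanSpace ℝ (Fin n))} {u : EuclideanSpace ℝ (Fin n) → ℝ}
  {φ : EuclideanSpace ℝ (Fin n) → EuclideanSpace ℝ (Fin n)}

lemma ofReal_integral_le_variationOn (hφ : ContDiff ℝ 1 φ) (hc : HasCompactSupport φ)
    (hs : tsupport φ ⊆ U) (h1 : ∀ x, ‖φ x‖ ≤ 1) :
    ENNReal.ofReal (∫ x in U, u x * divg φ x) ≤ variationOn U u :=
  le_iSup_of_le φ <| le_iSup_of_le hφ <| le_iSup_of_le hc <| le_iSup_of_le hs <|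
    le_iSup_of_le h1 le_rfl

lemma integral_le_variationOn_toReal (hBV : variationOn U u ≠ ⊤) (hφ : ContDiff ℝ 1 φ)
    (hc : HasCompactSupport φ) (hs : tsupport φ ⊆ U) (h1 : ∀ x, ‖φ x‖ ≤ 1) :
    ∫ x, u x * divg φ x ≤ (variationOn U u).toReal := by
  rw [← setIntegral_mul_divg hs]
  exact (ENNReal.ofReal_le_iff_le_toReal hBV).1 (ofReal_integral_le_variationOn hφ hc hs h1)

lemma variationOn_congr_ae {v : EuclideanSpace ℝ (Fin n) → ℝ}
    (h : u =ᵐ[volume.restrict U] v) : variationOn U u = variationOn U v := by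
  have (φ : EuclideanSpace ℝ (Fin n) → EuclideanSpace ℝ (Fin n)) :
      ∫ x in U, u x * divg φ x = ∫ x in U, v x * divg φ x :=
    integral_congr_ae (h.mono fun x hx => by simp [hx])
  simp only [variationOn, this]

lemma perimeterIn_superlevel_congr_ae {v : EuclideanSpace ℝ (Fin n) → ℝ}
    (h : u =ᵐ[volume.restrict U] v) (t : ℝ) :
    perimeterIn U {x | t < u x} = perimeterIn U {x | t < v x} :=
  variationOn_congr_ae (h.mono fun x hx => by simp [indicator, hx])

/-- The easy half of duality for mollifications: testing `ρ ⋆ u` against a field whose support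
stays at distance `rOut` from the complement of `U` is controlled by the variation of `u`. -/
lemma integral_convolution_mul_divg_le (hu : Integrable u) (hBV : variationOn U u ≠ ⊤)
    (ρ : ContDiffBump (0 : EuclideanSpace ℝ (Fin n))) (hφ : ContDiff ℝ 1 φ)
    (hc : HasCompactSupport φ) (h1 : ∀ x, ‖φ x‖ ≤ 1)
    (hs : cthickening ρ.rOut (tsupport φ) ⊆ U) :
    ∫ x, convolution (ρ.normed volume) u (ContinuousLinearMap.lsmul ℝ ℝ) volume x * divg φ x
      ≤ (variationOn U u).toReal := by
  have htr (y : EuclideanSpace ℝ (Fin n)) (hy : ‖y‖ < ρ.rOut) :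
      ∫ x, u (x - y) * divg φ x ≤ (variationOn U u).toReal := by
    have e : tsupport (fun z => φ (z + y)) = (Homeomorph.addRight y) ⁻¹' tsupport φ :=
      tsupport_comp_eq_preimage φ (Homeomorph.addRight y)
    calc ∫ x, u (x - y) * divg φ x = ∫ x, u (x + y - y) * divg φ (x + y) :=
          (integral_add_right_eq_self (fun x => u (x - y) * divg φ x) y).symm
      _ = ∫ x, u x * divg (fun z => φ (z + y)) x := by
          simp only [add_sub_cancel_right, divg_comp_add_right]
      _ ≤ _ := integral_le_variationOn_toReal hBV (by fun_prop)
          (hc.comp_homeomorph (Homeomorph.addRight y)) ?_ fun x => h1 _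
    rw [e]
    intro x hx
    refine hs (mem_cthickening_of_dist_le x (x + y) _ _ hx ?_)
    simpa [dist_eq_norm] using hy.le
  obtain ⟨C, hC⟩ := exists_abs_divg_le hφ hc
  have hρi : Integrable (ρ.normed volume) := ρ.integrable_normed
  have hint : Integrable (Function.uncurry fun x y => ρ.normed volume y * u (x - y) * divg φ x)
      (volume.prod volume) :=
    (hρi.convolution_integrand (ContinuousLinearMap.lsmul ℝ ℝ) hu).mul_bdd (c := C)
      ((continuous_divg hφ).comp continuous_fst).aestronglyMeasurable (.of_forall fun _ => hC _)
  calc ∫ x, convolution (ρ.normed volume) u (ContinuousLinearMap.lsmul ℝ ℝ) volume x * divg φ x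
      = ∫ x, ∫ y, ρ.normed volume y * u (x - y) * divg φ x := by
        simp only [convolution_def, integral_mul_const, ContinuousLinearMap.lsmul_apply,
          smul_eq_mul]
    _ = ∫ y, ρ.normed volume y * ∫ x, u (x - y) * divg φ x := by
        rw [integral_integral_swap hint]
        simp only [mul_assoc, integral_const_mul]
    _ ≤ ∫ y, ρ.normed volume y * (variationOn U u).toReal := by
        refine integral_mono ?_ (hρi.mul_const _) fun y => ?_
        · have h := hint.integral_prod_right
          simpa only [Function.uncurry, mul_assoc, integral_const_mul] using h
        · by_cases hy : ‖y‖ < ρ.rOut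
          · exact mul_le_mul_of_nonneg_left (htr y hy) (ρ.nonneg_normed y)
          · have : ρ.normed volume y = 0 := by
              rw [← Function.notMem_support, ρ.support_normed_eq]
              simpa using hy
            simp [this]
    _ = (variationOn U u).toReal := by
        rw [integral_mul_const, ρ.integral_normed, one_mul]

end Variation

section Mollification

variable {n : ℕ} {U : Set (EuclideanSpace ℝ (Fin n))} {u : EuclideanSpace ℝ (Fin n) → ℝ}

lemma exists_contDiff_cutoff (hU : IsOpen U) {K : Set (EuclideanSpace ℝ (Fin n))}
    (hK : IsCompact K) (hKU : K ⊆ U) :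
    ∃ χ : EuclideanSpace ℝ (Fin n) → ℝ, ContDiff ℝ 1 χ ∧ HasCompactSupport χ ∧
      tsupport χ ⊆ U ∧ (∀ x, 0 ≤ χ x) ∧ (∀ x, χ x ≤ 1) ∧ ∀ x ∈ K, χ x = 1 := by
  obtain ⟨L, hL, hKL, hLU⟩ := exists_compact_between hK hU hKU
  obtain ⟨χ, hχ, hr, h0, h1⟩ := exists_contMDiff_zero_iff_one_iff_of_isClosed
    (modelWithCornersSelf ℝ (EuclideanSpace ℝ (Fin n))) (n := 1) (s := (interior L)ᶜ) (t := K)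
    isOpen_interior.isClosed_compl hK.isClosed (disjoint_compl_left_iff_subset.2 hKL)
  have hsupp : tsupport χ ⊆ L := closure_minimal
    (fun x hx => interior_subset (by_contra fun h => hx ((h0 x).1 h))) hL.isClosed
  exact ⟨χ, hχ.contDiff, hL.of_isClosed_subset (isClosed_tsupport _) hsupp, hsupp.trans hLU,
    fun x => (hr ⟨x, rfl⟩).1, fun x => (hr ⟨x, rfl⟩).2, fun x hx => (h1 x).1 hx⟩

lemma sub_le_sq_div_sqrt {a δ : ℝ} (ha : 0 ≤ a) (hδ : 0 < δ) :
    a - δ ≤ a ^ 2 / √(a ^ 2 + δ ^ 2) := by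
  have hs : 0 < √(a ^ 2 + δ ^ 2) := by positivity
  have hsq : √(a ^ 2 + δ ^ 2) ^ 2 = a ^ 2 + δ ^ 2 := Real.sq_sqrt (by positivity)
  rw [le_div_iff₀ hs]
  have h1 : √(a ^ 2 + δ ^ 2) ≤ a + δ := by
    rw [Real.sqrt_le_left (by positivity)]
    nlinarith
  have h2 : a ≤ √(a ^ 2 + δ ^ 2) := Real.le_sqrt_of_sq_le (by nlinarith)
  nlinarith

/-- If testing `v` against fields supported in `tsupport χ` is bounded by `D`, then so is
`∫ χ |∇v|`; the near-optimal fields are the regularized directions `-χ ∇v / √(|∇v|² + δ²)`. -/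
lemma integral_mul_norm_fderiv_le {v χ : EuclideanSpace ℝ (Fin n) → ℝ} {D : ℝ}
    (hv : ContDiff ℝ 2 v) (hχ : ContDiff ℝ 1 χ) (hc : HasCompactSupport χ)
    (h0 : ∀ x, 0 ≤ χ x) (h1 : ∀ x, χ x ≤ 1)
    (hD : ∀ φ : EuclideanSpace ℝ (Fin n) → EuclideanSpace ℝ (Fin n), ContDiff ℝ 1 φ →
      tsupport φ ⊆ tsupport χ → (∀ x, ‖φ x‖ ≤ 1) → ∫ x, v x * divg φ x ≤ D) :
    ∫ x, χ x * ‖fderiv ℝ v x‖ ≤ D := by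
  have hdv : Continuous (fderiv ℝ v) := hv.continuous_fderiv two_ne_zero
  have hχc := hχ.continuous
  have hI1 : Integrable χ := hχc.integrable_of_hasCompactSupport hc
  have hI2 : Integrable fun x => χ x * ‖fderiv ℝ v x‖ :=
    Continuous.integrable_of_hasCompactSupport (by fun_prop) hc.mul_right
  have key (δ : ℝ) (hδ : 0 < δ) :
      ∫ x, χ x * ‖fderiv ℝ v x‖ ≤ D + δ * ∫ x, χ x := by
    have hg : ContDiff ℝ 1 (gradient v) :=
      (InnerProductSpace.toDual ℝ (EuclideanSpace ℝ (Fin n))).symm.contDiff.comp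
        (hv.fderiv_right (m := 1) (by norm_num))
    have hgn (x) : ‖gradient v x‖ = ‖fderiv ℝ v x‖ :=
      (InnerProductSpace.toDual ℝ (EuclideanSpace ℝ (Fin n))).symm.norm_map _
    have hgi (x) : fderiv ℝ v x (gradient v x) = ‖fderiv ℝ v x‖ ^ 2 := by
      rw [← hgn, ← real_inner_self_eq_norm_sq]
      exact (InnerProductSpace.toDual_symm_apply (𝕜 := ℝ)).symm
    have hpos (x) : 0 < ‖gradient v x‖ ^ 2 + δ ^ 2 := by positivity
    have hsq (x) : 0 < √(‖gradient v x‖ ^ 2 + δ ^ 2) := Real.sqrt_pos.2 (hpos x)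
    set φ : EuclideanSpace ℝ (Fin n) → EuclideanSpace ℝ (Fin n) :=
      fun x => -((χ x / √(‖gradient v x‖ ^ 2 + δ ^ 2)) • gradient v x) with hφdef
    have hφ : ContDiff ℝ 1 φ :=
      ((hχ.div (((hg.norm_sq ℝ).add contDiff_const).sqrt fun x => (hpos x).ne')
        fun x => (hsq x).ne').smul hg).neg
    have hsub : tsupport φ ⊆ tsupport χ := by
      refine closure_mono fun x hx hχx => hx ?_
      simp [hφdef, hχx]
    have hφ1 (x) : ‖φ x‖ ≤ 1 := by
      rw [hφdef, norm_neg, norm_smul, norm_div, Real.norm_of_nonneg (h0 x),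
        Real.norm_of_nonneg (hsq x).le, div_mul_eq_mul_div, div_le_one (hsq x)]
      calc χ x * ‖gradient v x‖ ≤ 1 * ‖gradient v x‖ := by gcongr; exact h1 x
        _ ≤ √(‖gradient v x‖ ^ 2 + δ ^ 2) := by
          rw [one_mul]
          exact Real.le_sqrt_of_sq_le (by nlinarith)
    have hcφ : HasCompactSupport φ := hc.of_isClosed_subset (isClosed_tsupport _) hsub
    have hφc := hφ.continuous
    have hle := hD φ hφ hsub hφ1
    rw [integral_mul_divg (hv.of_le one_le_two) hφ hcφ, ← integral_neg] at hle
    have hI3 : Integrable fun x => -fderiv ℝ v x (φ x) := by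
      refine Continuous.integrable_of_hasCompactSupport (by fun_prop) ?_
      refine hcφ.mono fun x hx h => hx ?_
      simp [h]
    calc ∫ x, χ x * ‖fderiv ℝ v x‖ ≤ ∫ x, (-fderiv ℝ v x (φ x) + δ * χ x) := by
          refine integral_mono hI2 (hI3.add (hI1.const_mul δ)) fun x => ?_
          have h := mul_le_mul_of_nonneg_left
            (sub_le_sq_div_sqrt (norm_nonneg (fderiv ℝ v x)) hδ) (h0 x)
          simp only [hφdef, map_neg, map_smul, smul_eq_mul, hgi, neg_neg, hgn]
          linarith [div_mul_eq_mul_div (χ x) √(‖fderiv ℝ v x‖ ^ 2 + δ ^ 2)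
            (‖fderiv ℝ v x‖ ^ 2), mul_div_assoc (χ x) (‖fderiv ℝ v x‖ ^ 2)
            √(‖fderiv ℝ v x‖ ^ 2 + δ ^ 2)]
      _ = (∫ x, -fderiv ℝ v x (φ x)) + δ * ∫ x, χ x := by
          rw [integral_add hI3 (hI1.const_mul δ), integral_const_mul]
      _ ≤ D + δ * ∫ x, χ x := by gcongr
  have hlim : Tendsto (fun δ : ℝ => D + δ * ∫ x, χ x) (𝓝[>] 0) (𝓝 D) := by
    have : Continuous fun δ : ℝ => D + δ * ∫ x, χ x := by fun_prop
    simpa using (this.tendsto 0).mono_left nhdsWithin_le_nhds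
  exact ge_of_tendsto hlim (eventually_mem_nhdsWithin.mono fun δ hδ => key δ hδ)

lemma contDiff_convolution_normed (hu : Integrable u)
    (ρ : ContDiffBump (0 : EuclideanSpace ℝ (Fin n))) {m : ℕ∞} :
    ContDiff ℝ m (convolution (ρ.normed volume) u (ContinuousLinearMap.lsmul ℝ ℝ) volume) :=
  ρ.hasCompactSupport_normed.contDiff_convolution_left _ ρ.contDiff_normed hu.locallyIntegrable

lemma exists_forall_lintegral_fderiv_convolution_le (hU : IsOpen U) (hu : Integrable u)
    (hBV : variationOn U u ≠ ⊤) {K : Set (EuclideanSpace ℝ (Fin n))} (hK : IsCompact K)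
    (hKU : K ⊆ U) :
    ∃ ε > 0, ∀ ρ : ContDiffBump (0 : EuclideanSpace ℝ (Fin n)), ρ.rOut ≤ ε →
      ∫⁻ x in K, ‖fderiv ℝ (convolution (ρ.normed volume) u
        (ContinuousLinearMap.lsmul ℝ ℝ) volume) x‖ₑ ≤ variationOn U u := by
  obtain ⟨χ, hχ, hc, hs, h0, h1, hK1⟩ := exists_contDiff_cutoff hU hK hKU
  obtain ⟨ε, hε, hεU⟩ := hc.isCompact.exists_cthickening_subset_open hU hs
  refine ⟨ε, hε, fun ρ hρ => ?_⟩
  set v := convolution (ρ.normed volume) u (ContinuousLinearMap.lsmul ℝ ℝ) volume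
  have hv : ContDiff ℝ 2 v := contDiff_convolution_normed hu ρ (m := 2)
  have hdv : Continuous (fderiv ℝ v) := hv.continuous_fderiv two_ne_zero
  have hχc := hχ.continuous
  have hle := integral_mul_norm_fderiv_le hv hχ hc h0 h1 fun φ hφ hsub hφ1 =>
    integral_convolution_mul_divg_le hu hBV ρ hφ
      (hc.of_isClosed_subset (isClosed_tsupport _) hsub) hφ1
      (((cthickening_mono hρ _).trans (cthickening_subset_of_subset ε hsub)).trans hεU)
  have hI : Integrable fun x => χ x * ‖fderiv ℝ v x‖ :=
    Continuous.integrable_of_hasCompactSupport (by fun_prop) hc.mul_right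
  calc ∫⁻ x in K, ‖fderiv ℝ v x‖ₑ
      = ∫⁻ x in K, ENNReal.ofReal (χ x * ‖fderiv ℝ v x‖) := by
        refine setLIntegral_congr_fun hK.measurableSet fun x hx => ?_
        simp [hK1 x hx]
    _ ≤ ∫⁻ x, ENNReal.ofReal (χ x * ‖fderiv ℝ v x‖) := setLIntegral_le_lintegral _ _
    _ = ENNReal.ofReal (∫ x, χ x * ‖fderiv ℝ v x‖) :=
        (ofReal_integral_eq_lintegral_ofReal hI
          (.of_forall fun x => mul_nonneg (h0 x) (norm_nonneg _))).symm
    _ ≤ variationOn U u := (ENNReal.ofReal_le_iff_le_toReal hBV).2 hle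

end Mollification

section SmoothStep

open Real (smoothTransition)

lemma continuous_deriv_smoothTransition : Continuous (deriv smoothTransition) :=
  (Real.smoothTransition.contDiff (n := 1)).continuous_deriv le_rfl

lemma deriv_smoothTransition_nonneg (s : ℝ) : 0 ≤ deriv smoothTransition s :=
  Real.smoothTransition.monotone.deriv_nonneg

lemma hasCompactSupport_deriv_smoothTransition :
    HasCompactSupport (deriv smoothTransition) := by
  refine HasCompactSupport.intro (isCompact_Icc (a := 0) (b := 1)) fun x hx => ?_
  rw [mem_Icc, not_and_or, not_le, not_le] at hx
  rcases hx with hx | hx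
  · have : smoothTransition =ᶠ[𝓝 x] fun _ => 0 := by
      filter_upwards [Iio_mem_nhds hx] with y hy
      exact Real.smoothTransition.zero_of_nonpos (le_of_lt hy)
    simp [this.deriv_eq]
  · have : smoothTransition =ᶠ[𝓝 x] fun _ => 1 := by
      filter_upwards [Ioi_mem_nhds hx] with y hy
      exact Real.smoothTransition.one_of_one_le (le_of_lt hy)
    simp [this.deriv_eq]

lemma integrable_deriv_smoothTransition : Integrable (deriv smoothTransition) :=
  continuous_deriv_smoothTransition.integrable_of_hasCompactSupport
    hasCompactSupport_deriv_smoothTransition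

lemma integral_deriv_smoothTransition : ∫ s, deriv smoothTransition s = 1 := by
  have h := integral_of_hasDerivAt_of_tendsto (f := smoothTransition) (m := 0) (n := 1)
    (fun x => ((Real.smoothTransition.contDiff (n := 1)).differentiable one_ne_zero
      x).hasDerivAt) integrable_deriv_smoothTransition
    (tendsto_const_nhds.congr' ?_) (tendsto_const_nhds.congr' ?_)
  · simpa using h
  · filter_upwards [eventually_le_atBot 0] with x hx
    exact (Real.smoothTransition.zero_of_nonpos hx).symm
  · filter_upwards [eventually_ge_atTop 1] with x hx
    exact (Real.smoothTransition.one_of_one_le hx).symm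

lemma lintegral_mul_deriv_smoothTransition {c : ℝ} (hc : 0 < c) (a : ℝ) :
    ∫⁻ t, ENNReal.ofReal (c * deriv smoothTransition (c * (a - t))) = 1 := by
  rw [lintegral_sub_left_eq_self
    (fun s => ENNReal.ofReal (c * deriv smoothTransition (c * s))) a,
    ← ofReal_integral_eq_lintegral_ofReal
      ((integrable_deriv_smoothTransition.comp_mul_left' hc.ne').const_mul c)
      (.of_forall fun s => mul_nonneg hc.le (deriv_smoothTransition_nonneg _)),
    integral_const_mul, Measure.integral_comp_mul_left, integral_deriv_smoothTransition]
  simp [abs_of_pos hc, hc.ne']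

end SmoothStep

section Coarea

open Real (smoothTransition)

variable {n : ℕ} {U : Set (EuclideanSpace ℝ (Fin n))} {u : EuclideanSpace ℝ (Fin n) → ℝ}

lemma exists_seq_isCompact_exhaustion (hU : IsOpen U) :
    ∃ K : ℕ → Set (EuclideanSpace ℝ (Fin n)), (∀ k, IsCompact (K k)) ∧ (∀ k, K k ⊆ U) ∧
      ∀ T, IsCompact T → T ⊆ U → ∀ᶠ k in atTop, T ⊆ K k := by
  have : LocallyCompactSpace U := hU.locallyCompactSpace
  let K := CompactExhaustion.choice U
  refine ⟨fun k => Subtype.val '' K k, fun k => (K.isCompact k).image continuous_subtype_val,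
    fun k => Subtype.coe_image_subset U _, fun T hT hTU => ?_⟩
  have hT' : IsCompact (Subtype.val ⁻¹' T : Set U) := by
    rw [Subtype.isCompact_iff, Subtype.image_preimage_coe, inter_eq_right.2 hTU]
    exact hT
  obtain ⟨m, hm⟩ := K.exists_superset_of_isCompact hT'
  filter_upwards [eventually_ge_atTop m] with k hk x hx
  exact ⟨⟨x, hTU hx⟩, K.subset hk (hm hx), rfl⟩

lemma ofReal_integral_smoothTransition_mul_divg_le {w : EuclideanSpace ℝ (Fin n) → ℝ}
    (hw : ContDiff ℝ 1 w) {φ : EuclideanSpace ℝ (Fin n) → EuclideanSpace ℝ (Fin n)}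
    (hφ : ContDiff ℝ 1 φ) (hc : HasCompactSupport φ) (h1 : ∀ x, ‖φ x‖ ≤ 1)
    {K : Set (EuclideanSpace ℝ (Fin n))} (hK : MeasurableSet K) (hφK : tsupport φ ⊆ K)
    {c : ℝ} (hc0 : 0 < c) (t : ℝ) :
    ENNReal.ofReal (∫ x, smoothTransition (c * (w x - t)) * divg φ x) ≤
      ∫⁻ x in K, ENNReal.ofReal (c * deriv smoothTransition (c * (w x - t))) *
        ‖fderiv ℝ w x‖ₑ := by
  have hfd (x) : fderiv ℝ (fun x => smoothTransition (c * (w x - t))) x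
      = (c * deriv smoothTransition (c * (w x - t))) • fderiv ℝ w x := by
    have h1 : HasDerivAt smoothTransition (deriv smoothTransition (c * (w x - t)))
        (c * (w x - t)) :=
      ((Real.smoothTransition.contDiff (n := 1)).differentiable one_ne_zero _).hasDerivAt
    have h2 : HasFDerivAt (fun x => c * (w x - t)) (c • fderiv ℝ w x) x :=
      ((hw.differentiable one_ne_zero x).hasFDerivAt.sub_const t).const_mul c
    have h3 := (h1.comp_hasFDerivAt x h2).fderiv
    rw [smul_smul, mul_comm] at h3
    exact h3
  have hS : ContDiff ℝ 1 fun x => smoothTransition (c * (w x - t)) :=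
    Real.smoothTransition.contDiff.comp (contDiff_const.mul (hw.sub contDiff_const))
  rw [integral_mul_divg hS hφ hc]
  refine (Real.ofReal_le_enorm _).trans ?_
  rw [enorm_neg, ← lintegral_indicator hK]
  refine (enorm_integral_le_lintegral_enorm _).trans (lintegral_mono fun x => ?_)
  by_cases hx : x ∈ K
  · rw [indicator_of_mem hx, hfd, smul_apply, enorm_smul,
      Real.enorm_of_nonneg (mul_nonneg hc0.le (deriv_smoothTransition_nonneg _))]
    gcongr
    rw [enorm_le_iff_norm_le]
    exact (fderiv ℝ w x).le_of_opNorm_le_of_le le_rfl (h1 x) |>.trans (mul_one _).le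
  · have : φ x = 0 := image_eq_zero_of_notMem_tsupport fun h => hx (hφK h)
    simp [this]

lemma tendsto_smoothTransition_indicator {c : ℕ → ℝ} (hc : Tendsto c atTop atTop)
    {a : ℕ → ℝ} {b t : ℝ} (ha : Tendsto a atTop (𝓝 b)) (hbt : b ≠ t) :
    Tendsto (fun k => smoothTransition (c k * (a k - t))) atTop
      (𝓝 (if t < b then 1 else 0)) := by
  have hat : Tendsto (fun k => a k - t) atTop (𝓝 (b - t)) := ha.sub_const t
  rcases hbt.lt_or_gt with h | h
  · rw [if_neg h.not_gt]
    refine tendsto_const_nhds.congr' ?_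
    filter_upwards [(hc.atTop_mul_neg (sub_neg.2 h) hat).eventually_le_atBot 0] with k hk
    exact (Real.smoothTransition.zero_of_nonpos hk).symm
  · rw [if_pos h]
    refine tendsto_const_nhds.congr' ?_
    filter_upwards [(hc.atTop_mul_pos (sub_pos.2 h) hat).eventually_ge_atTop 1] with k hk
    exact (Real.smoothTransition.one_of_one_le hk).symm

/-- The inequality `∫ Per({u > t}, U) dt ≤ |Du|(U)`: mollify `u`, use the coarea inequality for
smooth functions on compact subsets of `U`, and pass to the limit with Fatou's lemma. -/
lemma lintegral_perimeterIn_le (hU : IsOpen U) (hum : Measurable u) (hu : Integrable u)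
    (hBV : variationOn U u ≠ ⊤) :
    ∫⁻ t, perimeterIn U {x | t < u x} ≤ variationOn U u := by
  obtain ⟨K, hK, hKU, hKT⟩ := exists_seq_isCompact_exhaustion hU
  choose ε hε hεK using fun k =>
    exists_forall_lintegral_fderiv_convolution_le hU hu hBV (hK k) (hKU k)
  have hr (k : ℕ) : 0 < min (ε k) (1 / (k + 1)) := lt_min (hε k) Nat.one_div_pos_of_nat
  let ρ (k : ℕ) : ContDiffBump (0 : EuclideanSpace ℝ (Fin n)) :=
    ⟨min (ε k) (1 / (k + 1)) / 2, min (ε k) (1 / (k + 1)), half_pos (hr k), half_lt_self (hr k)⟩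
  have hρ : Tendsto (fun k => (ρ k).rOut) atTop (𝓝 0) :=
    squeeze_zero (fun k => (hr k).le) (fun k => min_le_right _ _)
      tendsto_one_div_add_atTop_nhds_zero_nat
  have hlim := ContDiffBump.ae_convolution_tendsto_right_of_locallyIntegrable (K := 2)
    (μ := volume) hρ (.of_forall fun k => (mul_div_cancel₀ (ρ k).rOut two_ne_zero).ge)
    hu.locallyIntegrable
  set v : ℕ → EuclideanSpace ℝ (Fin n) → ℝ := fun k =>
    convolution ((ρ k).normed volume) u (ContinuousLinearMap.lsmul ℝ ℝ) volume with hvdef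
  have hv (k) : ContDiff ℝ 1 (v k) := contDiff_convolution_normed hu (ρ k) (m := 1)
  have hvc (k) := (hv k).continuous
  have hvd (k) := (hv k).continuous_fderiv one_ne_zero
  let c (k : ℕ) : ℝ := k + 1
  have hc0 (k) : 0 < c k := Nat.cast_add_one_pos k
  have hc : Tendsto c atTop atTop :=
    tendsto_atTop_add_const_right _ _ tendsto_natCast_atTop_atTop
  have hdST := continuous_deriv_smoothTransition
  have hmeas (k) : Measurable fun p : EuclideanSpace ℝ (Fin n) × ℝ =>
      ENNReal.ofReal (c k * deriv smoothTransition (c k * (v k p.1 - p.2))) *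
        ‖fderiv ℝ (v k) p.1‖ₑ := by
    refine Measurable.mul (Continuous.measurable ?_).ennreal_ofReal
      (Continuous.measurable ?_).enorm
    · fun_prop
    · fun_prop
  let Q (k : ℕ) (t : ℝ) := ∫⁻ x in K k,
    ENNReal.ofReal (c k * deriv smoothTransition (c k * (v k x - t))) * ‖fderiv ℝ (v k) x‖ₑ
  have hQm (k) : Measurable (Q k) := (hmeas k).lintegral_prod_left'
  have hQ (k) : ∫⁻ t, Q k t ≤ variationOn U u := by
    refine le_trans (le_of_eq ?_) (hεK k (ρ k) (min_le_left _ _))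
    rw [lintegral_lintegral_swap (f := fun t x =>
      ENNReal.ofReal (c k * deriv smoothTransition (c k * (v k x - t))) * ‖fderiv ℝ (v k) x‖ₑ)
      ((hmeas k).comp measurable_swap).aemeasurable]
    refine lintegral_congr fun x => ?_
    rw [lintegral_mul_const _ (by fun_prop), lintegral_mul_deriv_smoothTransition (hc0 k),
      one_mul]
  have hlevel : ∀ᵐ t : ℝ, volume {x | u x = t} = 0 := by
    have h := (Measure.countable_meas_level_set_pos (μ := volume) hum).measure_zero volume
    filter_upwards [measure_eq_zero_iff_ae_notMem.1 h] with t ht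
    simpa using ht
  have hPer : ∀ᵐ t : ℝ, perimeterIn U {x | t < u x} ≤ liminf (fun k => Q k t) atTop := by
    filter_upwards [hlevel] with t ht
    refine iSup_le fun φ => iSup_le fun hφ => iSup_le fun hφc => iSup_le fun hφU =>
      iSup_le fun hφ1 => ?_
    rw [setIntegral_mul_divg hφU]
    have hDi : Integrable (divg φ) :=
      (continuous_divg hφ).integrable_of_hasCompactSupport (hasCompactSupport_divg hφc)
    have hT : Tendsto (fun k => ∫ x, smoothTransition (c k * (v k x - t)) * divg φ x) atTop
        (𝓝 (∫ x, {x | t < u x}.indicator (fun _ => (1 : ℝ)) x * divg φ x)) := by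
      refine tendsto_integral_of_dominated_convergence (fun x => ‖divg φ x‖)
        (fun k => ?_) hDi.norm (fun k => .of_forall fun x => ?_) ?_
      · exact ((Real.smoothTransition.continuous.comp (by fun_prop)).mul
          (continuous_divg hφ)).aestronglyMeasurable
      · rw [norm_mul, Real.norm_of_nonneg (Real.smoothTransition.nonneg _)]
        exact mul_le_of_le_one_left (norm_nonneg _) (Real.smoothTransition.le_one _)
      · filter_upwards [hlim, measure_eq_zero_iff_ae_notMem.1 ht] with x hx hxt
        have := tendsto_smoothTransition_indicator hc hx hxt
        simpa [indicator] using this.mul_const (divg φ x)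
    rw [← ((ENNReal.continuous_ofReal.tendsto _).comp hT).liminf_eq]
    refine liminf_le_liminf ?_
    filter_upwards [hKT _ hφc hφU] with k hk
    exact ofReal_integral_smoothTransition_mul_divg_le (hv k) hφ hφc hφ1 (hK k).measurableSet hk
      (hc0 k) t
  calc ∫⁻ t, perimeterIn U {x | t < u x}
      ≤ ∫⁻ t, liminf (fun k => Q k t) atTop := lintegral_mono_ae hPer
    _ ≤ liminf (fun k => ∫⁻ t, Q k t) atTop := lintegral_liminf_le hQm
    _ ≤ variationOn U u :=
        (liminf_le_liminf (.of_forall hQ)).trans_eq (liminf_const _)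

/-- Signed layer cake: the difference of superlevel indicators of `a` and `0` is the signed
indicator of the interval between them. -/
lemma indicator_superlevel_sub (a t : ℝ) :
    ((if t < a then 1 else 0) - (if t < 0 then 1 else 0) : ℝ) =
      (Ico 0 a).indicator 1 t - (Ico a 0).indicator 1 t := by
  simp only [indicator, mem_Ico, Pi.one_apply]
  grind

lemma integral_superlevel_sub (a : ℝ) :
    ∫ t : ℝ, ((if t < a then 1 else 0) - (if t < 0 then 1 else 0) : ℝ) = a := by
  simp only [indicator_superlevel_sub]
  rw [integral_sub, integral_indicator_one measurableSet_Ico,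
    integral_indicator_one measurableSet_Ico]
  · rcases le_total 0 a with h | h <;> simp [Measure.real, h]
  all_goals exact (integrable_indicator_iff measurableSet_Ico).2 (by simp [Pi.one_def])

lemma lintegral_enorm_superlevel_sub (a : ℝ) :
    ∫⁻ t : ℝ, ‖((if t < a then 1 else 0) - (if t < 0 then 1 else 0) : ℝ)‖ₑ = ‖a‖ₑ := by
  have (t : ℝ) : ‖((if t < a then 1 else 0) - (if t < 0 then 1 else 0) : ℝ)‖ₑ
      = (Ico 0 a ∪ Ico a 0).indicator 1 t := by
    rw [indicator_superlevel_sub]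
    simp only [indicator, mem_Ico, mem_union, Pi.one_apply]
    split_ifs <;> simp <;> grind
  simp only [this]
  rw [lintegral_indicator_one (measurableSet_Ico.union measurableSet_Ico)]
  rcases le_total 0 a with h | h
  · simp [h, Real.enorm_of_nonneg]
  · rw [Ico_eq_empty (not_lt.2 h), empty_union, Real.volume_Ico, ← enorm_neg,
      Real.enorm_of_nonneg (neg_nonneg.2 h), zero_sub]

lemma ofReal_integral_le_lintegral_ofReal {α : Type*} [MeasurableSpace α] {μ : Measure α}
    (f : α → ℝ) : ENNReal.ofReal (∫ x, f x ∂μ) ≤ ∫⁻ x, ENNReal.ofReal (f x) ∂μ := by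
  by_cases hf : Integrable f μ
  · rw [integral_eq_lintegral_pos_part_sub_lintegral_neg_part hf]
    exact (ENNReal.ofReal_le_ofReal (sub_le_self _ ENNReal.toReal_nonneg)).trans
      ENNReal.ofReal_toReal_le
  · simp [integral_undef hf]

/-- The inequality `|Du|(U) ≤ ∫ Per({u > t}, U) dt`, by Fubini and the layer cake formula. -/
lemma variationOn_le_lintegral_perimeterIn (hum : Measurable u) (hu : Integrable u) :
    variationOn U u ≤ ∫⁻ t, perimeterIn U {x | t < u x} := by
  refine iSup_le fun φ => iSup_le fun hφ => iSup_le fun hc => iSup_le fun hs =>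
    iSup_le fun h1 => ?_
  rw [setIntegral_mul_divg hs]
  obtain ⟨C, hC⟩ := exists_abs_divg_le hφ hc
  have hDi : Integrable (divg φ) :=
    (continuous_divg hφ).integrable_of_hasCompactSupport (hasCompactSupport_divg hc)
  have hm : Measurable fun p : EuclideanSpace ℝ (Fin n) × ℝ =>
      ((if p.2 < u p.1 then 1 else 0) - (if p.2 < 0 then 1 else 0) : ℝ) :=
    (Measurable.ite (measurableSet_lt measurable_snd (hum.comp measurable_fst))
      measurable_const measurable_const).sub
    (Measurable.ite (measurableSet_lt measurable_snd measurable_const)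
      measurable_const measurable_const)
  have hI : Integrable (fun p : EuclideanSpace ℝ (Fin n) × ℝ =>
      ((if p.2 < u p.1 then 1 else 0) - (if p.2 < 0 then 1 else 0) : ℝ))
      (volume.prod volume) := by
    refine ⟨hm.aestronglyMeasurable, ?_⟩
    rw [hasFiniteIntegral_iff_enorm, lintegral_prod _ hm.enorm.aemeasurable]
    simp only [lintegral_enorm_superlevel_sub]
    exact hu.2
  have hI' : Integrable (Function.uncurry fun (x : EuclideanSpace ℝ (Fin n)) (t : ℝ) =>
      ((if t < u x then 1 else 0) - (if t < 0 then 1 else 0) : ℝ) * divg φ x)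
      (volume.prod volume) :=
    hI.mul_bdd (c := C) ((continuous_divg hφ).comp continuous_fst).aestronglyMeasurable
      (.of_forall fun _ => hC _)
  have hslice (t : ℝ) :
      ∫ x, ((if t < u x then 1 else 0) - (if t < 0 then 1 else 0) : ℝ) * divg φ x
        = ∫ x, {x | t < u x}.indicator (fun _ => (1 : ℝ)) x * divg φ x := by
    have hA : Integrable fun x => {x | t < u x}.indicator (fun _ => (1 : ℝ)) x * divg φ x := by
      refine hDi.bdd_mul (c := 1) ?_ (.of_forall fun x => ?_)
      · exact (measurable_const.indicator
          (measurableSet_lt measurable_const hum)).aestronglyMeasurable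
      · simp only [indicator]
        split_ifs <;> simp
    calc _ = ∫ x, ({x | t < u x}.indicator (fun _ => (1 : ℝ)) x * divg φ x
            - (if t < 0 then 1 else 0) * divg φ x) := by
          simp only [sub_mul, indicator, mem_ofPred_eq]
      _ = _ := by
          rw [integral_sub hA (hDi.const_mul _), integral_const_mul, integral_divg hφ hc,
            mul_zero, sub_zero]
  calc ENNReal.ofReal (∫ x, u x * divg φ x)
      = ENNReal.ofReal (∫ t, ∫ x, {x | t < u x}.indicator (fun _ => (1 : ℝ)) x * divg φ x) := by
        simp only [← hslice]
        rw [← integral_integral_swap hI']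
        simp only [integral_mul_const, integral_superlevel_sub]
    _ ≤ ∫⁻ t, ENNReal.ofReal
          (∫ x, {x | t < u x}.indicator (fun _ => (1 : ℝ)) x * divg φ x) :=
        ofReal_integral_le_lintegral_ofReal _
    _ ≤ _ := lintegral_mono fun t => by
        rw [← setIntegral_mul_divg hs]
        exact ofReal_integral_le_variationOn hφ hc hs h1

end Coarea

/-- The coarea formula: for `u ∈ BV(U)` on an open set `U ⊆ ℝⁿ`,
`|Du|(U) = ∫_ℝ Per({u > t}, U) dt`. -/
theorem stmt11 {n : ℕ} (U : Set (EuclideanSpace ℝ (Fin n))) (hU : IsOpen U)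
    (u : EuclideanSpace ℝ (Fin n) → ℝ) (hu : IntegrableOn u U volume)
    (hBV : variationOn U u ≠ ⊤) :
    variationOn U u = ∫⁻ t : ℝ, perimeterIn U {x | t < u x} ∂volume := by
  obtain ⟨v, hvm, huv⟩ := hu.1
  have hw : u =ᵐ[volume.restrict U] U.indicator v :=
    huv.trans (indicator_ae_eq_restrict hU.measurableSet).symm
  have hwm : Measurable (U.indicator v) := hvm.measurable.indicator hU.measurableSet
  have hwi : Integrable (U.indicator v) :=
    (integrable_indicator_iff hU.measurableSet).2 (hu.congr huv)
  rw [variationOn_congr_ae hw] at hBV ⊢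
  simp only [perimeterIn_superlevel_congr_ae hw]
  exact le_antisymm (variationOn_le_lintegral_perimeterIn hwm hwi)
    (lintegral_perimeterIn_le hU hwm hwi hBV)
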